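/- arXiv:2410.01757 — 3 statements merged into one kernel-verified Lean document; each statement's English description precedes it below -/
import Mathlib

section
/- Let G be a countably infinite group in which every conjugacy class is finite (an FC group), and let G ↷ X be a free action by homeomorphisms on a compact metrizable space that has the marker property. Then the action has property FCSB. -/
open Set MeasureTheory Pointwise Topology

/-- The translates `g • U`, `g ∈ L`, are pairwise disjoint. -/
def LFreeSet {G X : Type*} [Group G] [MulAction G X] (L : Finset G) (U : Set X) : Prop :=
  ∀ g ∈ L, ∀ h ∈ L, g ≠ h → Disjoint (g • U) (h • U)

/-- `U` is a marker set: it is open and `G • U = X`. -/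
def IsMarkerSet (G : Type*) {X : Type*} [Group G] [MulAction G X] [TopologicalSpace X]
    (U : Set X) : Prop :=
  IsOpen U ∧ (⋃ g : G, g • U) = Set.univ

/-- The action has the marker property: for every finite `L ⊆ G` there is an `L`-free
marker set. -/
def MarkerProperty (G X : Type*) [Group G] [MulAction G X] [TopologicalSpace X] : Prop :=
  ∀ L : Finset G, ∃ U : Set X, IsMarkerSet G U ∧ LFreeSet L U

/-- The finite set `S` is `(K, ε)`-invariant: `|⋂_{g ∈ K} gS| > (1 - ε)|S|`. -/
def FolnerInv {G : Type*} [Group G] (K : Finset G) (ε : ℝ) (S : Finset G) : Prop :=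
  (1 - ε) * (S.card : ℝ) < ((⋂ g ∈ K, g • (S : Set G)).ncard : ℝ)

/-- `G` is amenable: there exist `(K, ε)`-invariant finite subsets for all `K` and `ε > 0`. -/
def IsAmenableGroup (G : Type*) [Group G] : Prop :=
  ∀ (K : Finset G) (ε : ℝ), 0 < ε → ∃ S : Finset G, FolnerInv K ε S

/-- The footprint `SV = ⋃_{g ∈ S} gV` of a tower `(S, V)`. -/
def Footprint {G X : Type*} [Group G] [MulAction G X] (S : Finset G) (V : Set X) : Set X :=
  ⋃ g ∈ S, g • V

/-- `{(S i, V i)}` is a castle: the bases are open and `S i`-free and the footprints are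
pairwise disjoint. -/
def IsCastle {G X : Type*} [Group G] [MulAction G X] [TopologicalSpace X] {n : ℕ}
    (S : Fin n → Finset G) (V : Fin n → Set X) : Prop :=
  (∀ i, IsOpen (V i)) ∧ (∀ i, LFreeSet (S i) (V i)) ∧
    (Pairwise fun i j => Disjoint (Footprint (S i) (V i)) (Footprint (S j) (V j)))

/-- Upper Banach density `D̄(A) = inf_F sup_x |A ∩ Fx| / |F|`. -/
noncomputable def upperBD (G : Type*) {X : Type*} [Group G] [MulAction G X] (A : Set X) : ℝ :=
  ⨅ F : {F : Finset G // F.Nonempty},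
    ⨆ x : X, ((A ∩ ((· • x) '' (F.1 : Set G))).ncard : ℝ) / (F.1.card : ℝ)

/-- Lower Banach density `D̲(A) = sup_F inf_x |A ∩ Fx| / |F|`. -/
noncomputable def lowerBD (G : Type*) {X : Type*} [Group G] [MulAction G X] (A : Set X) : ℝ :=
  ⨆ F : {F : Finset G // F.Nonempty},
    ⨅ x : X, ((A ∩ ((· • x) '' (F.1 : Set G))).ncard : ℝ) / (F.1.card : ℝ)

/-- The Uniform Rokhlin Property. -/
def URP (G X : Type*) [Group G] [MulAction G X] [TopologicalSpace X] : Prop :=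
  ∀ (K : Finset G) (ε : ℝ), 0 < ε →
    ∃ (n : ℕ) (S : Fin n → Finset G) (V : Fin n → Set X),
      IsCastle S V ∧ (∀ i, FolnerInv K ε (S i)) ∧
        upperBD G (Set.univ \ ⋃ i, Footprint (S i) (V i)) < ε

/-- Dynamical subequivalence of a (closed) set `A` to an open set `B`: `A` admits a finite
open cover whose pieces can be translated into pairwise disjoint subsets of `B`. -/
def Subeq (G : Type*) {X : Type*} [Group G] [MulAction G X] [TopologicalSpace X]
    (A B : Set X) : Prop :=
  ∃ (n : ℕ) (U : Fin n → Set X) (g : Fin n → G),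
    (∀ j, IsOpen (U j)) ∧ A ⊆ (⋃ j, U j) ∧ (∀ j, g j • U j ⊆ B) ∧
      (Pairwise fun j k => Disjoint (g j • U j) (g k • U k))

/-- `μ` is a `G`-invariant Borel probability measure. -/
def InvariantProb (G : Type*) {X : Type*} [Group G] [MulAction G X] [MeasurableSpace X]
    (μ : Measure X) : Prop :=
  IsProbabilityMeasure μ ∧ ∀ g : G, Measure.map (fun x => g • x) μ = μ

/-- The action has comparison. -/
def HasComparison (G X : Type*) [Group G] [MulAction G X] [TopologicalSpace X]
    [MeasurableSpace X] : Prop :=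
  ∀ A B : Set X, IsClosed A → IsOpen B →
    (∀ μ : Measure X, InvariantProb G μ → μ A < μ B) → Subeq G A B

/-- URPC: the Uniform Rokhlin Property together with comparison. -/
def URPC (G X : Type*) [Group G] [MulAction G X] [TopologicalSpace X] [MeasurableSpace X] :
    Prop :=
  URP G X ∧ HasComparison G X

/-- The subequivalence `Σᵢ [A i] ≺ Σⱼ [B j]` in the type semigroup: for all closed sets
`C i ⊆ A i` there are a finite family of open sets `U k`, group elements `g k`, an
assignment `a` recording which `C i` the set `U k` helps to cover, and an assignment `b`
recording into which `B j` the translate `g k • U k` is placed, such that the translates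
assigned to a common `B j` are pairwise disjoint. -/
def FamSubeq (G : Type*) {X : Type*} [Group G] [MulAction G X] [TopologicalSpace X]
    {ι κ : Type*} [Fintype ι] [Fintype κ] (A : ι → Set X) (B : κ → Set X) : Prop :=
  ∀ C : ι → Set X, (∀ i, IsClosed (C i)) → (∀ i, C i ⊆ A i) →
    ∃ (n : ℕ) (U : Fin n → Set X) (g : Fin n → G) (a : Fin n → ι) (b : Fin n → κ),
      (∀ k, IsOpen (U k)) ∧
      (∀ i, C i ⊆ ⋃ (k) (_ : a k = i), U k) ∧
      (∀ k, g k • U k ⊆ B (b k)) ∧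
      (∀ k l, k ≠ l → b k = b l → Disjoint (g k • U k) (g l • U l))
/-- Property FCSB: the marker property holds and for every finite `F ⊆ G` and every marker
set `V` there are `F`-free open sets `U i` with
`Σᵢ [∂(U i)] + [X \ ⋃ᵢ U i] ≺ [V]` in the type semigroup, where, following the convention
for closed sets, the closed sets are replaced by (arbitrarily small) open neighbourhoods. -/
def FCSB (G X : Type*) [Group G] [MulAction G X] [TopologicalSpace X] : Prop :=
  MarkerProperty G X ∧
  ∀ (F : Finset G) (V : Set X), IsMarkerSet G V →
    ∃ (n : ℕ) (U : Fin n → Set X),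
      (∀ i, IsOpen (U i)) ∧ (∀ i, LFreeSet F (U i)) ∧
      ∃ (W : Fin n → Set X) (W0 : Set X),
        (∀ i, IsOpen (W i)) ∧ (∀ i, frontier (U i) ⊆ W i) ∧
        IsOpen W0 ∧ Set.univ \ (⋃ i, U i) ⊆ W0 ∧
        FamSubeq G (Sum.elim W fun _ : Fin 1 => W0) (fun _ : Fin 1 => V)

/-- Property FCSB in measure: for every finite `F ⊆ G` and `ε > 0` there are `F`-free open
sets `U i` with `Σᵢ μ(∂(U i)) + μ(X \ ⋃ᵢ U i) < ε` for every invariant probability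
measure `μ`. -/
def FCSBInMeasure (G X : Type*) [Group G] [MulAction G X] [TopologicalSpace X]
    [MeasurableSpace X] : Prop :=
  ∀ (F : Finset G) (ε : ℝ), 0 < ε →
    ∃ (n : ℕ) (U : Fin n → Set X),
      (∀ i, IsOpen (U i)) ∧ (∀ i, LFreeSet F (U i)) ∧
      ∀ μ : Measure X, InvariantProb G μ →
        (∑ i, (μ (frontier (U i))).toReal) + (μ (Set.univ \ ⋃ i, U i)).toReal < ε

/-- Every open set of a compact metrizable space is the cozero set of a nonnegative continuous
function. -/
theorem exists_cozero {X : Type*} [TopologicalSpace X] [TopologicalSpace.MetrizableSpace X]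
    (M : Set X) (hM : IsOpen M) : ∃ φ : X → ℝ, Continuous φ ∧ ∀ x, 0 < φ x ↔ x ∈ M := by
  let _ := TopologicalSpace.metrizableSpaceMetric X
  rcases (Mᶜ).eq_empty_or_nonempty with h | h
  · have hu : M = Set.univ := Set.compl_empty_iff.mp h
    exact ⟨fun _ => 1, continuous_const, fun x => by simp [hu]⟩
  · refine ⟨fun x => Metric.infDist x Mᶜ, Metric.continuous_infDist_pt _, fun x => ?_⟩
    rw [← hM.isClosed_compl.notMem_iff_infDist_pos h]
    simp

/-- Finitely many translates of a marker set cover a compact space. -/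
theorem IsMarkerSet.exists_finset {G X : Type*} [Group G] [TopologicalSpace X] [CompactSpace X]
    [MulAction G X] [ContinuousConstSMul G X] {V : Set X} (hV : IsMarkerSet G V) :
    ∃ K : Finset G, ∀ x : X, ∃ k ∈ K, k⁻¹ • x ∈ V := by
  obtain ⟨K, hK⟩ := isCompact_univ.elim_finite_subcover (fun g : G => g • V)
    (fun g => hV.1.smul g) hV.2.ge
  refine ⟨K, fun x => ?_⟩
  have := hK (Set.mem_univ x)
  simpa only [Set.mem_iUnion, exists_prop, Set.mem_smul_set_iff_inv_smul_mem] using this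

/-- A free action of a countably infinite FC group with the marker
property has property FCSB. -/
theorem fc_markerProperty_implies_fcsb {G X : Type*} [Group G] [Countable G] [Infinite G]
    [TopologicalSpace X] [CompactSpace X] [TopologicalSpace.MetrizableSpace X]
    [MulAction G X] [ContinuousConstSMul G X]
    (hFC : ∀ g : G, (Set.range fun c : G => c * g * c⁻¹).Finite)
    (hfree : ∀ (g : G) (x : X), g • x = x → g = 1)
    (hmarker : MarkerProperty G X) :
    FCSB G X := by
  classical
  refine ⟨hmarker, fun F V hV => ?_⟩
  obtain ⟨K, hK⟩ := hV.exists_finset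
  -- the finite set for which the marker set is chosen to be free
  have hconj : (⋃ p ∈ F ×ˢ F, Set.range fun c : G => c * (p.1⁻¹ * p.2) * c⁻¹).Finite :=
    Set.Finite.biUnion (F ×ˢ F).finite_toSet fun p _ => hFC _
  obtain ⟨M, hM, hMfree⟩ := hmarker
    (insert 1 (hconj.toFinset ∪ (K ×ˢ K).image fun p => p.1 * p.2⁻¹))
  have key : ∀ h : G, h ≠ 1 → (h ∈ hconj.toFinset ∨ ∃ k ∈ K, ∃ l ∈ K, h = k * l⁻¹) →
      ∀ x, x ∈ M → h⁻¹ • x ∉ M := by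
    intro h h1 hh x hx hx'
    have hmem : h ∈ insert 1 (hconj.toFinset ∪ (K ×ˢ K).image fun p => p.1 * p.2⁻¹) := by
      rcases hh with hh | ⟨k, hk, l, hl, rfl⟩
      · exact Finset.mem_insert_of_mem (Finset.mem_union_left _ hh)
      · exact Finset.mem_insert_of_mem (Finset.mem_union_right _
          (Finset.mem_image.mpr ⟨(k, l), Finset.mem_product.mpr ⟨hk, hl⟩, rfl⟩))
    have := hMfree 1 (Finset.mem_insert_self _ _) h hmem h1.symm
    rw [one_smul] at this
    exact Set.disjoint_left.mp this hx (Set.mem_smul_set_iff_inv_smul_mem.mpr hx')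
  obtain ⟨φ, hφ, hφM⟩ := exists_cozero M hM.1
  -- a uniform threshold
  obtain ⟨D0, hD0⟩ := hM.exists_finset
  obtain ⟨m, hm⟩ := isCompact_univ.elim_directed_cover
    (fun m : ℕ => ⋃ g : G, {x : X | 1 / ((m : ℝ) + 1) < φ (g⁻¹ • x)})
    (fun m => isOpen_iUnion fun g =>
      isOpen_lt continuous_const (hφ.comp (continuous_const_smul _)))
    (by
      intro x _
      obtain ⟨g, _, hg⟩ := hD0 x
      obtain ⟨m, hm⟩ := exists_nat_one_div_lt ((hφM _).mpr hg)
      exact Set.mem_iUnion.mpr ⟨m, Set.mem_iUnion.mpr ⟨g, hm⟩⟩)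
    (by
      refine Monotone.directed_le fun a b hab => Set.iUnion_mono fun g x hx => ?_
      have hx' : 1 / ((a : ℝ) + 1) < φ (g⁻¹ • x) := hx
      exact lt_of_le_of_lt (Nat.one_div_le_one_div hab) hx')
  obtain ⟨D, hD⟩ := isCompact_univ.elim_finite_subcover
    (fun g : G => {x : X | 1 / ((m : ℝ) + 1) < φ (g⁻¹ • x)})
    (fun g => isOpen_lt continuous_const (hφ.comp (continuous_const_smul _))) hm
  set δ : ℝ := 1 / ((m : ℝ) + 1) with hδ
  have hδ0 : 0 < δ := by positivity
  set n := D.card with hn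
  let e : Fin n ≃ D := D.equivFin.symm
  let lo : Fin n → ℝ := fun i => δ * (i : ℝ) / n
  let θ : Fin n → ℝ := fun i => δ * ((i : ℝ) + 1 / 2) / n
  let hi : Fin n → ℝ := fun i => δ * ((i : ℝ) + 1) / n
  have hn0 : ∀ i : Fin n, (0 : ℝ) < n := fun i => by exact_mod_cast i.pos
  have hlo0 : ∀ i, 0 ≤ lo i := fun i => by positivity
  have hloθ : ∀ i, lo i < θ i := fun i =>
    div_lt_div_of_pos_right (by nlinarith) (hn0 i)
  have hθhi : ∀ i, θ i < hi i := fun i =>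
    div_lt_div_of_pos_right (by nlinarith) (hn0 i)
  have hhiδ : ∀ i, hi i ≤ δ := fun i => by
    rw [div_le_iff₀ (hn0 i)]
    have : ((i : ℕ) : ℝ) + 1 ≤ n := by exact_mod_cast i.isLt
    nlinarith
  have hhilo : ∀ i j : Fin n, i < j → hi i ≤ lo j := fun i j hij => by
    have : ((i : ℕ) : ℝ) + 1 ≤ (j : ℕ) := by exact_mod_cast hij
    exact div_le_div_of_nonneg_right (by nlinarith) (hn0 i).le
  have hcont : ∀ g : G, Continuous fun x : X => φ (g⁻¹ • x) :=
    fun g => hφ.comp (continuous_const_smul _)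
  refine ⟨n, fun i => {x | θ i < φ ((e i : G)⁻¹ • x)}, fun i => isOpen_lt continuous_const (hcont _),
    ?_, fun i => {x | lo i < φ ((e i : G)⁻¹ • x) ∧ φ ((e i : G)⁻¹ • x) < hi i}, ∅,
    fun i => (isOpen_lt continuous_const (hcont _)).inter (isOpen_lt (hcont _) continuous_const),
    ?_, isOpen_empty, ?_, ?_⟩
  · -- freeness
    intro i a ha b hb hab
    rw [Set.disjoint_left]
    intro x hxa hxb
    rw [Set.mem_smul_set_iff_inv_smul_mem, Set.mem_ofPred_eq] at hxa hxb
    have hpos : 0 < θ i := lt_of_le_of_lt (hlo0 i) (hloθ i)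
    have ma := (hφM _).mp (hpos.trans hxa)
    have mb := (hφM _).mp (hpos.trans hxb)
    refine key ((e i : G)⁻¹ * (a⁻¹ * b) * (e i : G)) ?_ (Or.inl ?_) _ ma ?_
    · intro h
      apply hab
      have h2 : a⁻¹ * b = 1 := by
        have := congrArg (fun t => (e i : G) * t * (e i : G)⁻¹) h
        simpa [mul_assoc] using this
      exact inv_mul_eq_one.mp h2
    · rw [Set.Finite.mem_toFinset]
      refine Set.mem_iUnion₂.mpr ⟨(a, b), Finset.mem_product.mpr ⟨ha, hb⟩, (e i : G)⁻¹, ?_⟩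
      simp
    · convert mb using 1
      simp only [← mul_smul]
      congr 1
      group
  · -- boundaries
    intro i x hx
    have h := frontier_lt_subset_eq continuous_const (hcont (e i)) hx
    have heq : θ i = φ ((e i : G)⁻¹ • x) := h
    exact ⟨heq ▸ hloθ i, heq ▸ hθhi i⟩
  · -- covering
    rintro x ⟨_, hx⟩
    apply hx
    obtain ⟨g, hg, hgx⟩ := Set.mem_iUnion₂.mp (hD (Set.mem_univ x))
    refine Set.mem_iUnion.mpr ⟨e.symm ⟨g, hg⟩, ?_⟩
    have : ((e (e.symm ⟨g, hg⟩) : D) : G) = g := by simp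
    rw [Set.mem_ofPred_eq, this]
    exact ((hθhi _).trans_le (hhiδ _)).trans hgx
  · -- comparison
    intro C _ hC
    let q : Fin (Fintype.card (Fin n × K)) ≃ Fin n × K := (Fintype.equivFin _).symm
    refine ⟨Fintype.card (Fin n × K),
      fun p => {x | lo (q p).1 < φ ((e (q p).1 : G)⁻¹ • x) ∧ φ ((e (q p).1 : G)⁻¹ • x) < hi (q p).1} ∩
        {x | ((q p).2 : G)⁻¹ • (e (q p).1 : G)⁻¹ • x ∈ V},
      fun p => ((q p).2 : G)⁻¹ * (e (q p).1 : G)⁻¹, fun p => Sum.inl (q p).1, fun _ => 0,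
      ?_, ?_, ?_, ?_⟩
    · intro p
      refine ((isOpen_lt continuous_const (hcont _)).inter
        (isOpen_lt (hcont _) continuous_const)).inter (hV.1.preimage ?_)
      exact (continuous_const_smul _).comp (continuous_const_smul _)
    · rintro (i | i) x hx
      · obtain ⟨k, hk, hkx⟩ := hK ((e i : G)⁻¹ • x)
        refine Set.mem_iUnion₂.mpr ⟨q.symm (i, ⟨k, hk⟩), by simp, ?_⟩
        have := hC _ hx
        simp only [Equiv.apply_symm_apply]
        exact ⟨this, hkx⟩
      · exact (hC _ hx).elim
    · rintro p _ ⟨x, ⟨_, hx⟩, rfl⟩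
      change (((q p).2 : G)⁻¹ * (e (q p).1 : G)⁻¹) • x ∈ V
      rw [mul_smul]
      exact hx
    · intro p p' hpp' _
      rw [Set.disjoint_left]
      rintro _ ⟨x, ⟨hx, _⟩, rfl⟩ ⟨y, ⟨hy, _⟩, hxy⟩
      have hne : q p ≠ q p' := fun h => hpp' (q.injective h)
      simp only [mul_smul] at hxy
      generalize q p = s at *
      generalize q p' = s' at *
      obtain ⟨i, k, hk⟩ := s
      obtain ⟨j, l, hl⟩ := s'
      simp only [Set.mem_ofPred_eq] at hx hy hxy
      generalize (e i : G)⁻¹ • x = u at *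
      generalize (e j : G)⁻¹ • y = v at *
      have hu := (hφM u).mp ((hlo0 i).trans_lt hx.1)
      have hv := (hφM v).mp ((hlo0 j).trans_lt hy.1)
      by_cases hkl : k = l
      · subst hkl
        have huv : v = u := smul_left_cancel _ hxy
        subst huv
        rcases lt_trichotomy i j with h | h | h
        · exact absurd (hx.2.trans_le (hhilo i j h)) (not_lt.mpr hy.1.le)
        · exact hne (by rw [h])
        · exact absurd (hy.2.trans_le (hhilo j i h)) (not_lt.mpr hx.1.le)
      · refine key (k * l⁻¹) (fun h => hkl (mul_inv_eq_one.mp h))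
          (Or.inr ⟨k, hk, l, hl, rfl⟩) u hu ?_
        have : (k * l⁻¹)⁻¹ • u = v := by
          rw [mul_inv_rev, inv_inv, mul_smul, ← hxy, smul_inv_smul]
        rwa [this]
end

section
/- Let g be a homeomorphism of a compact metrizable space X, generating an action of the cyclic group ⟨g⟩ on X. Let {U_i}_{i=1}^n be a collection of open {e,g}-free sets and let δ > 0. Then there exist open {e,g}-free sets V_1, V_2, V_3 whose closures are pairwise disjoint such that [∂V_1] + [∂V_2] + [∂V_3] + [X \ (V_1 ∪ V_2 ∪ V_3)] ≺ 8·(Σ_{i=1}^n [(∂U_i)^δ] + [X \ ⋃_{i=1}^n U_i^{-δ}]) in the type semigroup of the ⟨g⟩-action. -/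
open Set MeasureTheory Pointwise Topology

/-- The inner set `A^{-δ} = {x : ρ(x, X \ A) > δ}`. -/
def innerSet {X : Type*} [MetricSpace X] (δ : ℝ) (A : Set X) : Set X :=
  (Metric.cthickening δ Aᶜ)ᶜ

open Classical in
/-- Greedy colouring of `ℤ` (0 means uncoloured). -/
noncomputable def greedyCol (w : ℤ → ℕ → Prop) : ℕ → ℤ → ℕ
  | 0, _ => 0
  | m + 1, k =>
    if greedyCol w m k ≠ 0 then greedyCol w m k
    else if w k m then
      (if greedyCol w m (k - 1) ≠ 1 ∧ greedyCol w m (k + 1) ≠ 1 then 1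
       else if greedyCol w m (k - 1) ≠ 2 ∧ greedyCol w m (k + 1) ≠ 2 then 2 else 3)
    else 0

theorem greedyCol_le (w : ℤ → ℕ → Prop) (m : ℕ) (k : ℤ) : greedyCol w m k ≤ 3 := by
  induction m generalizing k with
  | zero => simp [greedyCol]
  | succ m ih =>
    have := ih k
    simp only [greedyCol]
    split_ifs <;> omega

theorem greedyCol_ne_zero (w : ℤ → ℕ → Prop) (m : ℕ) (k : ℤ) (j : ℕ) (hj : j < m)
    (h : w k j) : greedyCol w m k ≠ 0 := by
  induction m with
  | zero => omega
  | succ m ih =>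
    simp only [greedyCol]
    by_cases h0 : greedyCol w m k ≠ 0
    · rw [if_pos h0]; exact h0
    · have : j = m := by
        by_contra hne
        exact h0 (ih (by omega))
      subst this
      rw [if_neg h0, if_pos h]
      split_ifs <;> omega

theorem greedyCol_congr (w w' : ℤ → ℕ → Prop) (c : ℤ) (m : ℕ) (k : ℤ)
    (h : ∀ l, k - m ≤ l → l ≤ k + m → w l = w' (l + c)) :
    greedyCol w m k = greedyCol w' m (k + c) := by
  induction m generalizing k with
  | zero => simp [greedyCol]
  | succ m ih =>
    push_cast at h
    have h1 := ih k (fun l h1 h2 => h l (by omega) (by omega))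
    have h2 := ih (k - 1) (fun l h1 h2 => h l (by omega) (by omega))
    have h3 := ih (k + 1) (fun l h1 h2 => h l (by omega) (by omega))
    have h4 : w k m ↔ w' (k + c) m := by rw [h k (by omega) (by omega)]
    rw [show k - 1 + c = k + c - 1 by ring] at h2
    rw [show k + 1 + c = k + c + 1 by ring] at h3
    simp only [greedyCol, h1, h2, h3]
    by_cases hx : w' (k + c) m
    · rw [if_pos hx, if_pos (h4.2 hx)]
    · rw [if_neg hx, if_neg (fun h => hx (h4.1 h))]

theorem greedyCol_proper (w : ℤ → ℕ → Prop) (hw : ∀ k j, ¬ (w k j ∧ w (k + 1) j)) (m : ℕ) (k : ℤ)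
    (h : greedyCol w m k ≠ 0) : greedyCol w m k ≠ greedyCol w m (k + 1) := by
  induction m generalizing k with
  | zero => simp [greedyCol] at h
  | succ m ih =>
    have h1 := ih k
    have h2 := hw k m
    have e : k + 1 - 1 = k := by ring
    have l1 := greedyCol_le w m k
    have l2 := greedyCol_le w m (k + 1)
    simp only [greedyCol, e] at h ⊢
    generalize greedyCol w m k = a at *
    generalize greedyCol w m (k + 1) = b at *
    generalize greedyCol w m (k - 1) = c at *
    generalize greedyCol w m (k + 1 + 1) = d at *
    by_cases wa : w k m <;> by_cases wb : w (k + 1) m <;>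
      simp only [wa, wb, if_true, if_false] at h h2 ⊢ <;> grind

/-- Shrinking and counting step. -/
theorem reduction_step {X : Type*} [MetricSpace X] [CompactSpace X]
    [MulAction (Multiplicative ℤ) X] [ContinuousConstSMul (Multiplicative ℤ) X]
    (n N : ℕ) (D : Fin n → Set X) (R : Set X) (V : Fin 3 → Set X)
    (hV : ∀ i, IsOpen (V i))
    (hfree : ∀ i, Disjoint (V i) ((Multiplicative.ofAdd (1 : ℤ)) • V i))
    (hdis : Pairwise fun i j => Disjoint (V i) (V j))
    (B : Fin n → Fin N → Set X) (hB : ∀ i k, IsOpen (B i k)) (hBD : ∀ i k, B i k ⊆ D i)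
    (hBB : ∀ i (k l : Fin N), k ≠ l → (k : ℕ) % 2 = (l : ℕ) % 2 → Disjoint (B i k) (B i l))
    (γ : Fin N → Multiplicative ℤ)
    (M : Set X) (hM : IsOpen M) (hMR : M ⊆ R)
    (hcov : (⋃ i, V i)ᶜ ⊆ (⋃ (i) (k), (γ k)⁻¹ • B i k) ∪ M) :
    ∃ V : Fin 3 → Set X,
      (∀ i, IsOpen (V i)) ∧
      (∀ i, Disjoint (V i) ((Multiplicative.ofAdd (1 : ℤ)) • V i)) ∧
      (Pairwise fun i j => Disjoint (closure (V i)) (closure (V j))) ∧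
      ∀ τ : ℝ, 0 < τ →
        ∃ δL δR : ℝ, 0 < δL ∧ δL < τ ∧ 0 < δR ∧ δR < τ ∧
          FamSubeq (Multiplicative ℤ)
            (Sum.elim (fun i : Fin 3 => Metric.thickening δL (frontier (V i)))
              (fun _ : Fin 1 => Metric.thickening δL (Set.univ \ ⋃ i, V i)))
            (fun p : Fin 8 × (Fin n ⊕ Fin 1) =>
              Sum.elim (fun i : Fin n => D i)
                (fun _ : Fin 1 => Metric.thickening δR R) p.2) := by
  set Z : Set X := (⋃ i, V i)ᶜ with hZ
  set O : Set X := (⋃ (i) (k), (γ k)⁻¹ • B i k) ∪ M with hO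
  have hZc : IsClosed Z := (isOpen_iUnion hV).isClosed_compl
  have hOo : IsOpen O :=
    (isOpen_iUnion fun i => isOpen_iUnion fun k => (hB i k).smul _).union hM
  obtain ⟨ε₂, hε₂, hsub⟩ := hZc.isCompact.exists_thickening_subset_open hOo hcov
  set ε := ε₂ / 2 with hε
  have hεpos : 0 < ε := by positivity
  have hcl : ∀ i, closure (V i \ Metric.cthickening ε Z) ⊆ V i := by
    intro i x hx
    have hx1 : x ∈ (Metric.thickening ε Z)ᶜ := by
      refine closure_minimal ?_ Metric.isOpen_thickening.isClosed_compl hx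
      intro y hy hy'
      exact hy.2 (Metric.thickening_subset_cthickening _ _ hy')
    have hx2 : x ∉ Z := fun h => hx1 (Metric.self_subset_thickening hεpos _ h)
    simp only [hZ, mem_compl_iff, not_not, mem_iUnion] at hx2
    obtain ⟨j, hj⟩ := hx2
    by_cases hij : i = j
    · rw [hij]; exact hj
    · exfalso
      obtain ⟨y, hy1, hy2⟩ := mem_closure_iff.1 hx (V j) (hV j) hj
      exact (Set.disjoint_left.1 (hdis hij)) hy2.1 hy1
  have hVo : ∀ i, IsOpen (V i \ Metric.cthickening ε Z) := fun i =>
    (hV i).sdiff Metric.isClosed_cthickening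
  refine ⟨fun i => V i \ Metric.cthickening ε Z, hVo, ?_, ?_, ?_⟩
  · intro i
    exact (hfree i).mono sdiff_subset (Set.smul_set_mono sdiff_subset)
  · intro i j hij
    exact (hdis hij).mono (hcl i) (hcl j)
  intro τ hτ
  refine ⟨min ε τ / 2, τ / 2, by positivity, ?_, by positivity, by linarith, ?_⟩
  · have := min_le_right ε τ
    linarith
  set δL := min ε τ / 2 with hδL
  have hδLε : δL + ε ≤ ε₂ := by
    have := min_le_left ε τ
    linarith
  have hrem : (Set.univ \ ⋃ i, (V i \ Metric.cthickening ε Z)) ⊆ Metric.cthickening ε Z := by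
    intro x hx
    by_contra hc
    have hxZ : x ∉ Z := fun h => hc (Metric.self_subset_cthickening _ h)
    simp only [hZ, mem_compl_iff, not_not, mem_iUnion] at hxZ
    obtain ⟨j, hj⟩ := hxZ
    exact hx.2 (mem_iUnion.2 ⟨j, hj, hc⟩)
  have hfr : ∀ i, frontier (V i \ Metric.cthickening ε Z) ⊆ Metric.cthickening ε Z := by
    intro i x hx
    by_contra hc
    have h1 : x ∈ V i := hcl i (frontier_subset_closure hx)
    rw [(hVo i).frontier_eq] at hx
    exact hx.2 ⟨h1, hc⟩
  have hth : ∀ S : Set X, S ⊆ Metric.cthickening ε Z → Metric.thickening δL S ⊆ O := by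
    intro S hS
    refine (Metric.thickening_subset_of_subset _ hS).trans ?_
    refine (Metric.thickening_cthickening_subset _ hεpos.le _).trans ?_
    exact (Metric.thickening_mono hδLε _).trans hsub
  intro C _ hCA
  have hCO : ∀ q, C q ⊆ O := by
    rintro (i | i)
    · exact (hCA (Sum.inl i)).trans (hth _ (hfr i))
    · exact (hCA (Sum.inr i)).trans (hth _ hrem)
  -- index set
  let K := (Fin 3 ⊕ Fin 1) × ((Fin n × Fin N) ⊕ Unit)
  let e : K ≃ Fin (Fintype.card K) := Fintype.equivFin K
  let f : (Fin 3 ⊕ Fin 1) × Fin 2 → Fin 8 := fun p =>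
    (finProdFinEquiv (finSumFinEquiv p.1, p.2) : Fin (4 * 2))
  have hf : Function.Injective f := by
    intro p q h
    have h' := finProdFinEquiv.injective h
    simp only [Prod.mk.injEq, EmbeddingLike.apply_eq_iff_eq] at h'
    exact Prod.ext h'.1 h'.2
  let UU : K → Set X := fun p => Sum.elim (fun ik => (γ ik.2)⁻¹ • B ik.1 ik.2) (fun _ => M) p.2
  let gg : K → Multiplicative ℤ := fun p => Sum.elim (fun ik => γ ik.2) (fun _ => 1) p.2
  let bb : K → Fin 8 × (Fin n ⊕ Fin 1) := fun p =>
    Sum.elim (fun ik => (f (p.1, ⟨(ik.2 : ℕ) % 2, Nat.mod_lt _ (by norm_num)⟩), Sum.inl ik.1))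
      (fun _ => (f (p.1, 0), Sum.inr 0)) p.2
  refine ⟨Fintype.card K, fun k => UU (e.symm k), fun k => gg (e.symm k),
    fun k => (e.symm k).1, fun k => bb (e.symm k), ?_, ?_, ?_, ?_⟩
  · intro k
    beta_reduce
    generalize e.symm k = p
    obtain ⟨q, (⟨i, k⟩ | u)⟩ := p
    · exact (hB i k).smul _
    · exact hM
  · intro q x hx
    rcases hCO q hx with h | h
    · simp only [mem_iUnion] at h
      obtain ⟨i, k, h⟩ := h
      simp only [mem_iUnion]
      exact ⟨e (q, Sum.inl (i, k)), by simp, by simpa [UU] using h⟩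
    · simp only [mem_iUnion]
      exact ⟨e (q, Sum.inr ()), by simp, by simpa [UU] using h⟩
  · intro k
    beta_reduce
    generalize e.symm k = p
    obtain ⟨q, (⟨i, k⟩ | u)⟩ := p
    · simp only [gg, UU, bb, Sum.elim_inl, smul_inv_smul]
      exact hBD i k
    · simp only [gg, UU, bb, Sum.elim_inr, one_smul]
      exact hMR.trans (Metric.self_subset_thickening (half_pos hτ) _)
  · intro k l hkl
    have hne : e.symm k ≠ e.symm l := fun h => hkl (e.symm.injective h)
    revert hne
    beta_reduce
    generalize e.symm k = p
    generalize e.symm l = p'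
    obtain ⟨q, (⟨i, k⟩ | u)⟩ := p <;> obtain ⟨q', (⟨i', k'⟩ | u')⟩ := p'
    · intro hne hb
      simp only [bb, Sum.elim_inl, Prod.mk.injEq, Sum.inl.injEq, hf.eq_iff, Fin.mk.injEq] at hb
      obtain ⟨⟨rfl, hpar⟩, rfl⟩ := hb
      simp only [gg, UU, Sum.elim_inl, smul_inv_smul]
      refine hBB i k k' ?_ hpar
      rintro rfl
      exact hne rfl
    · intro hne hb
      simp [bb] at hb
    · intro hne hb
      simp [bb] at hb
    · intro hne hb
      simp only [bb, Sum.elim_inr, Prod.mk.injEq, hf.eq_iff, and_true] at hb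
      exact absurd (by rw [hb]) hne

/-- Cover reduction for a single homeomorphism: an action of the cyclic
group generated by a homeomorphism `g` is encoded as an action of `Multiplicative ℤ`, with
`g` the image of `1 : ℤ`. Given `{e, g}`-free open sets `U 1, …, U n` and `δ > 0`, there
are `{e, g}`-free open sets `V 1, V 2, V 3` with pairwise disjoint closures such that
`[∂V₁] + [∂V₂] + [∂V₃] + [X \ (V₁ ∪ V₂ ∪ V₃)] ≺ 8 (Σᵢ [(∂Uᵢ)^δ] + [X \ ⋃ᵢ Uᵢ^{-δ}])`
in the type semigroup of the action, where, by the convention for closed sets, the closed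
sets appearing are replaced by arbitrarily small metric thickenings. -/
theorem cyclic_cover_reduction {X : Type*} [MetricSpace X] [CompactSpace X]
    [MulAction (Multiplicative ℤ) X] [ContinuousConstSMul (Multiplicative ℤ) X]
    (n : ℕ) (U : Fin n → Set X)
    (hUopen : ∀ i, IsOpen (U i))
    (hUfree : ∀ i, Disjoint (U i) ((Multiplicative.ofAdd (1 : ℤ)) • U i))
    (δ : ℝ) (hδ : 0 < δ) :
    ∃ V : Fin 3 → Set X,
      (∀ i, IsOpen (V i)) ∧
      (∀ i, Disjoint (V i) ((Multiplicative.ofAdd (1 : ℤ)) • V i)) ∧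
      (Pairwise fun i j => Disjoint (closure (V i)) (closure (V j))) ∧
      ∀ τ : ℝ, 0 < τ →
        ∃ δL δR : ℝ, 0 < δL ∧ δL < τ ∧ 0 < δR ∧ δR < τ ∧
          FamSubeq (Multiplicative ℤ)
            (Sum.elim (fun i : Fin 3 => Metric.thickening δL (frontier (V i)))
              (fun _ : Fin 1 => Metric.thickening δL (Set.univ \ ⋃ i, V i)))
            (fun p : Fin 8 × (Fin n ⊕ Fin 1) =>
              Sum.elim (fun i : Fin n => Metric.thickening δ (frontier (U i)))
                (fun _ : Fin 1 =>
                  Metric.thickening δR (Set.univ \ ⋃ i, innerSet δ (U i))) p.2) := by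
  -- levels
  let s : ℤ → ℝ := fun j => δ * ((j : ℝ) + 2 * n + 3) / (4 * n + 5)
  have hsmono : StrictMono s := by
    intro a b hab
    have : (a : ℝ) < b := by exact_mod_cast hab
    simp only [s]
    gcongr
  have hslt : ∀ j : ℤ, j ≤ 2 * n + 1 → s j < δ := by
    intro j hj
    have : (j : ℝ) ≤ 2 * n + 1 := by exact_mod_cast hj
    simp only [s]
    rw [div_lt_iff₀ (by positivity)]
    nlinarith
  have hspos : ∀ j : ℤ, -(2 * n + 3) < j → 0 < s j := by
    intro j hj
    have : -(2 * (n : ℝ) + 3) < j := by exact_mod_cast hj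
    simp only [s]
    have : 0 < (j : ℝ) + 2 * n + 3 := by linarith
    positivity
  let E : ℤ → ENNReal := fun j => ENNReal.ofReal (s j)
  have hEmono : Monotone E := fun a b h => ENNReal.ofReal_le_ofReal (hsmono.monotone h)
  have hElt : ∀ a b : ℤ, -(2 * n + 3) < b → a < b → E a < E b := by
    intro a b hb hab
    exact (ENNReal.ofReal_lt_ofReal_iff (hspos b hb)).2 (hsmono hab)
  have hEδ : ∀ j : ℤ, j ≤ 2 * n + 1 → E j < ENNReal.ofReal δ := fun j hj =>
    (ENNReal.ofReal_lt_ofReal_iff hδ).2 (hslt j hj)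
  let d : Fin n → X → ENNReal := fun i x => Metric.infEDist x (frontier (U i))
  have hd : ∀ i, Continuous (d i) := fun i => Metric.continuous_infEDist
  have hdpos : ∀ i x, 0 < d i x → x ∉ frontier (U i) := by
    intro i x h hx
    simp only [d, Metric.infEDist_zero_of_mem hx, lt_self_iff_false] at h
  let P : Fin n → ℤ → X → Prop := fun i k x => x ∈ U i ∧ E (2 * k) < d i x
  let A : Fin n → ℤ → Set X := fun i k => {x | E (2 * k - 2) ≤ d i x ∧ d i x ≤ E (2 * k)}
  have hPopen : ∀ i k, IsOpen {x | P i k x} := fun i k =>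
    (hUopen i).inter (isOpen_lt continuous_const (hd i))
  have hAclosed : ∀ i k, IsClosed (A i k) := fun i k =>
    (isClosed_le continuous_const (hd i)).inter (isClosed_le (hd i) continuous_const)
  have hPA : ∀ i k x, x ∉ A i k → (P i k x ↔ P i (k - 1) x) := by
    intro i k x hx
    have e : 2 * (k - 1) = 2 * k - 2 := by ring
    simp only [P, e]
    constructor
    · rintro ⟨h1, h2⟩
      exact ⟨h1, (hEmono (by omega)).trans_lt h2⟩
    · rintro ⟨h1, h2⟩
      refine ⟨h1, ?_⟩
      by_contra h3
      exact hx ⟨h2.le, not_lt.1 h3⟩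
  -- local constancy
  have hPloc : ∀ i k x, x ∉ A i k → ∀ᶠ y in 𝓝 x, (P i k y ↔ P i k x) := by
    intro i k x hx
    by_cases hp : P i k x
    · filter_upwards [(hPopen i k).mem_nhds hp] with y hy
      exact ⟨fun _ => hp, fun _ => hy⟩
    · by_cases h : d i x < E (2 * k)
      · filter_upwards [(isOpen_lt (hd i) continuous_const).mem_nhds h] with y hy
        refine ⟨fun h' => absurd h'.2 (not_lt.2 (le_of_lt hy)), fun h' => absurd h' hp⟩
      · have h2 : E (2 * k) < d i x := by
          by_contra h3
          exact hx ⟨(hEmono (by omega)).trans (not_lt.1 h), not_lt.1 h3⟩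
        have h4 : x ∉ U i := fun h' => hp ⟨h', h2⟩
        have h5 : x ∉ closure (U i) := by
          intro h'
          refine hdpos i x (bot_le.trans_lt h2) ?_
          rw [(hUopen i).frontier_eq]
          exact ⟨h', h4⟩
        filter_upwards [isClosed_closure.isOpen_compl.mem_nhds h5] with y hy
        exact ⟨fun h' => absurd (subset_closure h'.1) hy, fun h' => absurd h' hp⟩
  let t : ℤ → Multiplicative ℤ := fun k => Multiplicative.ofAdd k
  let w : X → ℤ → ℕ → Prop := fun x k j => ∃ h : j < n, P ⟨j, h⟩ k (t k • x)
  let Z₁ : Set X := ⋃ (i) (k ∈ Set.Icc (-(n : ℤ)) n), (fun x => t k • x) ⁻¹' A i k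
  let Z : Set X := Z₁ ∪ (⋃ i, {x | P i 0 x})ᶜ
  have hZclosed : IsClosed Z := by
    refine IsClosed.union ?_ (isOpen_iUnion fun i => hPopen i 0).isClosed_compl
    refine isClosed_iUnion_of_finite fun i => ?_
    exact (Set.finite_Icc _ _).isClosed_biUnion fun k _ =>
      (hAclosed i k).preimage (continuous_const_smul (t k))
  have hZA : ∀ x ∉ Z, ∀ i k, -(n : ℤ) ≤ k → k ≤ n → t k • x ∉ A i k := by
    intro x hx i k h1 h2 h3
    refine hx (Or.inl ?_)
    simp only [Z₁, mem_iUnion]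
    exact ⟨i, k, ⟨h1, h2⟩, h3⟩
  let col : X → ℕ := fun x => greedyCol (w x) n 0
  have hcolloc : ∀ x ∉ Z, ∀ᶠ y in 𝓝 x, col y = col x := by
    intro x hx
    have h1 : ∀ᶠ y in 𝓝 x, ∀ k ∈ Set.Icc (-(n : ℤ)) n, ∀ i,
        (P i k (t k • y) ↔ P i k (t k • x)) := by
      rw [Filter.eventually_all_finite (Set.finite_Icc _ _)]
      intro k hk
      rw [Filter.eventually_all]
      intro i
      exact (continuous_const_smul (t k)).continuousAt.eventually
        (hPloc i k _ (hZA x hx i k hk.1 hk.2))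
    filter_upwards [h1] with y hy
    refine greedyCol_congr (w y) (w x) 0 n 0 ?_
    intro l hl1 hl2
    funext j
    simp only [w, add_zero, eq_iff_iff]
    exact exists_congr fun h => hy l ⟨by omega, by omega⟩ ⟨j, h⟩
  let V : Fin 3 → Set X := fun j => {x | x ∉ Z ∧ col x = j + 1}
  have hVopen : ∀ j, IsOpen (V j) := by
    intro j
    rw [isOpen_iff_mem_nhds]
    rintro x ⟨hx1, hx2⟩
    filter_upwards [hcolloc x hx1, hZclosed.isOpen_compl.mem_nhds hx1] with y hy1 hy2
    exact ⟨hy2, hy1.trans hx2⟩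
  have hVcompl : (⋃ j, V j)ᶜ ⊆ Z := by
    intro x hx
    by_contra hxZ
    have h1 : ∃ i, P i 0 x := by
      by_contra h
      refine hxZ (Or.inr ?_)
      simpa using h
    obtain ⟨i, hi⟩ := h1
    have h2 : col x ≠ 0 := by
      refine greedyCol_ne_zero (w x) n 0 i i.2 ⟨i.2, ?_⟩
      simpa [t] using hi
    have h3 : col x ≤ 3 := greedyCol_le _ _ _
    refine hx (mem_iUnion.2 ⟨⟨col x - 1, by omega⟩, hxZ, ?_⟩)
    show col x = (col x - 1) + 1
    omega
  have hVfree : ∀ j, Disjoint (V j) ((Multiplicative.ofAdd (1 : ℤ)) • V j) := by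
    intro j
    rw [Set.disjoint_left]
    rintro _ hx ⟨y, hy, rfl⟩
    have hcol : col y = col (t 1 • y) := hy.2.trans hx.2.symm
    let w' : ℤ → ℕ → Prop := fun k j => ∃ h : j < n, P ⟨j, h⟩ (if k ≤ n then k else k - 1) (t k • y)
    have hts : ∀ k, t k • t 1 • y = t (k + 1) • y := by
      intro k
      rw [smul_smul]
      rfl
    have e1 : col y = greedyCol w' n 0 := by
      refine greedyCol_congr (w y) w' 0 n 0 ?_
      intro l hl1 hl2
      funext j
      have : l ≤ n := by omega
      simp only [w, w', add_zero, if_pos this]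
    have e2 : col (t 1 • y) = greedyCol w' n (0 + 1) := by
      refine greedyCol_congr (w (t 1 • y)) w' 1 n 0 ?_
      intro l hl1 hl2
      funext j
      simp only [w, w', eq_iff_iff, hts]
      refine exists_congr fun h => ?_
      by_cases hl : l + 1 ≤ n
      · rw [if_pos hl, hPA _ _ _ (hZA y hy.1 ⟨j, h⟩ (l + 1) (by omega) hl), add_sub_cancel_right]
      · rw [if_neg hl, add_sub_cancel_right]
    have hw' : ∀ k j, ¬ (w' k j ∧ w' (k + 1) j) := by
      rintro k j ⟨⟨h, h1⟩, ⟨_, h2⟩⟩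
      refine Set.disjoint_left.1 (hUfree ⟨j, h⟩) h2.1 ⟨t k • y, h1.1, ?_⟩
      show t 1 • t k • y = t (k + 1) • y
      rw [smul_smul, add_comm]
      rfl
    have hne : greedyCol w' n 0 ≠ 0 := by
      rw [← e1, hy.2]
      omega
    exact greedyCol_proper w' hw' n 0 hne (e1.symm.trans (hcol.trans e2))
  have hVdis : Pairwise fun i j => Disjoint (V i) (V j) := by
    intro i j hij
    rw [Set.disjoint_left]
    intro x hx hx'
    apply hij
    have := hx.2.symm.trans hx'.2
    exact Fin.ext (by omega)
  let κ : Fin (2 * n + 1) → ℤ := fun k => (k : ℤ) - n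
  refine reduction_step n (2 * n + 1) (fun i => Metric.thickening δ (frontier (U i)))
    (Set.univ \ ⋃ i, innerSet δ (U i)) V hVopen hVfree hVdis
    (fun i k => {x | E (2 * κ k - 3) < d i x ∧ d i x < E (2 * κ k + 1)}) ?_ ?_ ?_
    (fun k => t (κ k)) {x | ∀ i, x ∉ closure (U i) ∨ d i x < E 1} ?_ ?_ ?_
  · intro i k
    exact (isOpen_lt continuous_const (hd i)).inter (isOpen_lt (hd i) continuous_const)
  · intro i k x hx
    rw [Metric.mem_thickening_iff_infEDist_lt]
    refine hx.2.trans (hEδ _ ?_)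
    have := k.2
    simp only [κ]
    omega
  · intro i k l hkl hpar
    rw [Set.disjoint_left]
    rintro x ⟨h1, h2⟩ ⟨h3, h4⟩
    have hkl' : (k : ℕ) ≠ l := fun h => hkl (Fin.ext h)
    rcases lt_or_gt_of_ne hkl' with h | h
    · have : E (2 * κ k + 1) ≤ E (2 * κ l - 3) := hEmono (by simp only [κ]; omega)
      exact absurd (h2.trans_le (this.trans h3.le)) (lt_irrefl _)
    · have : E (2 * κ l + 1) ≤ E (2 * κ k - 3) := hEmono (by simp only [κ]; omega)
      exact absurd (h4.trans_le (this.trans h1.le)) (lt_irrefl _)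
  · rw [Set.ofPred_forall]
    refine isOpen_iInter_of_finite fun i => ?_
    exact isClosed_closure.isOpen_compl.union (isOpen_lt (hd i) continuous_const)
  · intro x hx
    refine ⟨trivial, ?_⟩
    simp only [mem_iUnion, not_exists]
    intro i hi
    have hcth : x ∉ Metric.cthickening δ (U i)ᶜ := hi
    rw [Metric.mem_cthickening_iff] at hcth
    have hxU : x ∈ U i := by
      by_contra h
      apply hcth
      rw [Metric.infEDist_zero_of_mem (show x ∈ (U i)ᶜ from h)]
      exact bot_le
    have hdx : d i x < E 1 := by
      rcases hx i with h | h
      · exact absurd (subset_closure hxU) h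
      · exact h
    apply hcth
    have hsub : frontier (U i) ⊆ (U i)ᶜ := by
      rw [(hUopen i).frontier_eq]
      exact fun y hy => hy.2
    exact (Metric.infEDist_anti hsub).trans (hdx.trans (hEδ 1 (by omega))).le
  · refine hVcompl.trans ?_
    rintro x (hx | hx)
    · left
      simp only [Z₁, mem_iUnion] at hx
      obtain ⟨i, k, ⟨hk1, hk2⟩, hx⟩ := hx
      simp only [mem_iUnion]
      refine ⟨i, ⟨(k + n).toNat, by omega⟩, ?_⟩
      have hκ : κ ⟨(k + n).toNat, by omega⟩ = k := by
        simp only [κ]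
        omega
      rw [Set.mem_inv_smul_set_iff, hκ]
      exact ⟨(hElt _ _ (by omega) (by omega)).trans_le hx.1,
        hx.2.trans_lt (hElt _ _ (by omega) (by omega))⟩
    · right
      intro i
      have hPi : ¬ P i 0 x := fun h => hx (mem_iUnion.2 ⟨i, h⟩)
      by_cases hxc : x ∈ closure (U i)
      · right
        by_cases hxU : x ∈ U i
        · have : d i x ≤ E (2 * 0) := by
            by_contra h
            exact hPi ⟨hxU, not_le.1 h⟩
          exact this.trans_lt (hElt _ _ (by omega) (by omega))
        · have hfr : x ∈ frontier (U i) := by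
            rw [(hUopen i).frontier_eq]
            exact ⟨hxc, hxU⟩
          have : d i x = 0 := Metric.infEDist_zero_of_mem hfr
          rw [this]
          exact ENNReal.ofReal_pos.2 (hspos 1 (by omega))
      · exact Or.inl hxc
end

section
/- Let Y be a compact metrizable space, N ∈ ℕ, and let F : Y → [0,1]^N be continuous. Let γ ≥ 0 and δ > 0, let 𝒰 be a finite open cover of Y, and let 𝒱 be a finite collection of open subsets of Y such that (i) ord(𝒰) + ord(𝒱) ≤ (1−γ)N/2, and (ii) |F(x) − F(y)|_∞ < δ/2 for every U ∈ 𝒰 and all x, y ∈ U. Then there exists a continuous map F̃ : Y → [0,1]^N with sup_{y∈Y} |F(y) − F̃(y)|_∞ < δ such that for every subset I ⊂ {1,…,N} with |I| > (1−γ)N, the map π_I ∘ F̃ encodes every set in the collection 𝒰 ⊔ 𝒱. -/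
open Set Topology

/-- `H` encodes the set `U`: `H⁻¹(H(U)) = U`. -/
def Encodes {Y Z : Type*} (H : Y → Z) (U : Set Y) : Prop :=
  H ⁻¹' (H '' U) = U

/-- The order of a finite family of sets: the supremum over points of the number of
members containing the point. -/
noncomputable def famOrd {Y ι : Type*} (U : ι → Set Y) : ℕ :=
  ⨆ y : Y, ({i : ι | y ∈ U i} : Set ι).ncard

theorem aux_generic {ι : Type} [Fintype ι] [DecidableEq ι] (N : ℕ) (s : ι → Fin N → Set ℝ)
    (hs : ∀ i k, (s i k).Infinite) :
    ∃ v : ι → Fin N → ℝ, (∀ i k, v i k ∈ s i k) ∧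
      ∀ (c : ι → ℝ) (S : Finset ι) (I : Finset (Fin N)), S.card ≤ I.card →
        (∀ i, i ∉ S → c i = 0) → (∀ k ∈ I, ∑ i, c i * v i k = 0) → ∀ i, c i = 0 := by
  classical
  let Q : (n : ℕ) → (Fin n ↪ ι) → (Fin n ↪ Fin N) → MvPolynomial (ι × Fin N) ℝ :=
    fun n g f => MvPolynomial.rename (fun p : Fin n × Fin n => (g p.1, f p.2))
      (Matrix.mvPolynomialX (Fin n) (Fin n) ℝ).det
  have hQ : ∀ n g f, Q n g f ≠ 0 := by
    intro n g f h
    have hinj : Function.Injective (fun p : Fin n × Fin n => (g p.1, f p.2)) := by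
      rintro ⟨a, b⟩ ⟨a', b'⟩ h
      simpa using h
    exact Matrix.det_mvPolynomialX_ne_zero (Fin n) ℝ
      (MvPolynomial.rename_injective _ hinj (by simpa [Q] using h))
  let P : MvPolynomial (ι × Fin N) ℝ :=
    ∏ n ∈ Finset.range (N + 1), ∏ g : Fin n ↪ ι, ∏ f : Fin n ↪ Fin N, Q n g f
  have hP : P ≠ 0 :=
    Finset.prod_ne_zero_iff.2 fun n _ => Finset.prod_ne_zero_iff.2 fun g _ =>
      Finset.prod_ne_zero_iff.2 fun f _ => hQ n g f
  obtain ⟨x, hxs, hx⟩ : ∃ x : ι × Fin N → ℝ, (∀ p, x p ∈ s p.1 p.2) ∧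
      MvPolynomial.eval x P ≠ 0 := by
    by_contra! hcon
    apply hP
    apply MvPolynomial.funext_set (fun p : ι × Fin N => s p.1 p.2) (fun p => hs p.1 p.2)
    intro x hx
    rw [hcon x (fun p => hx p (Set.mem_univ p)), map_zero]
  refine ⟨fun i k => x (i, k), fun i k => hxs (i, k), ?_⟩
  intro c S I hSI hc hsum
  obtain ⟨I', hI'I, hI'⟩ := Finset.exists_subset_card_eq hSI
  let g : Fin S.card ↪ ι := S.equivFin.symm.toEmbedding.trans (Function.Embedding.subtype _)
  let f : Fin S.card ↪ Fin N :=
    (I'.equivFinOfCardEq hI').symm.toEmbedding.trans (Function.Embedding.subtype _)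
  have hn : S.card ∈ Finset.range (N + 1) := by
    have := Finset.card_le_univ I
    simp at this ⊢
    omega
  simp only [P, map_prod] at hx
  have h3 := Finset.prod_ne_zero_iff.1 (Finset.prod_ne_zero_iff.1
    (Finset.prod_ne_zero_iff.1 hx _ hn) g (Finset.mem_univ _)) f (Finset.mem_univ _)
  let M : Matrix (Fin S.card) (Fin S.card) ℝ := Matrix.of fun a b => x (g a, f b)
  have hdet : M.det ≠ 0 := by
    convert h3 using 1
    simp only [Q, MvPolynomial.eval_rename]
    rw [RingHom.map_det]
    congr 1
    ext a b
    simp [M, Matrix.mvPolynomialX]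
  have hz := Matrix.eq_zero_of_vecMul_eq_zero hdet (v := fun a => c (g a)) (by
    ext b
    have hb : f b ∈ I := hI'I (by simp [f])
    have := hsum _ hb
    simp only [Matrix.vecMul, dotProduct, Pi.zero_apply, M, Matrix.of_apply]
    rw [← this, ← Finset.sum_subset (Finset.subset_univ S)
      (fun i _ hi => by rw [hc i hi, zero_mul]), ← Finset.sum_coe_sort S]
    exact Fintype.sum_equiv S.equivFin.symm _ _ (fun a => rfl))
  intro i
  by_cases hi : i ∈ S
  · have := congrFun hz (S.equivFin ⟨i, hi⟩)
    simpa [g] using this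
  · exact hc i hi

theorem aux_bump {Y : Type*} [TopologicalSpace Y] [TopologicalSpace.MetrizableSpace Y]
    (U : Set Y) (hU : IsOpen U) :
    ∃ h : Y → ℝ, Continuous h ∧ (∀ y, 0 ≤ h y) ∧ (∀ y, h y ≤ 1) ∧ ∀ y, 0 < h y ↔ y ∈ U := by
  letI := TopologicalSpace.metrizableSpaceMetric Y
  rcases Set.eq_empty_or_nonempty Uᶜ with he | hne
  · refine ⟨fun _ => 1, continuous_const, by simp, by simp, ?_⟩
    intro y
    have : U = Set.univ := by simpa using he
    simp [this]
  · refine ⟨fun y => min 1 (Metric.infDist y Uᶜ), by fun_prop, ?_, ?_, ?_⟩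
    · intro y
      exact le_min zero_le_one Metric.infDist_nonneg
    · intro y
      exact min_le_left _ _
    · intro y
      have h1 := (hU.isClosed_compl).mem_iff_infDist_zero hne (x := y)
      have h2 : 0 ≤ Metric.infDist y Uᶜ := Metric.infDist_nonneg
      rw [lt_min_iff]
      constructor
      · rintro ⟨_, h⟩
        by_contra hy
        exact h.ne' (h1.1 hy)
      · intro hy
        refine ⟨one_pos, lt_of_le_of_ne h2 fun h => ?_⟩
        exact (h1.2 h.symm) hy

theorem aux_ord {Y ι : Type*} [Finite ι] (U : ι → Set Y) (y : Y) :
    ({i : ι | y ∈ U i} : Set ι).ncard ≤ famOrd U := by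
  refine le_ciSup (f := fun y : Y => ({i : ι | y ∈ U i} : Set ι).ncard) ?_ y
  refine ⟨Nat.card ι, ?_⟩
  rintro _ ⟨z, rfl⟩
  exact Set.ncard_le_card _

/-- Perturbation lemma: given a continuous `F : Y → [0, 1]^N`, `γ ≥ 0`,
`δ > 0`, a finite open cover `𝒰` and a finite collection `𝒱` of open sets with
`ord(𝒰) + ord(𝒱) ≤ (1 - γ)N/2` and `F`-oscillation less than `δ/2` on each member of `𝒰`,
there is a continuous `F̃ : Y → [0, 1]^N` that is `δ`-close to `F` in the uniform maximum
norm and such that for any `I ⊆ {1, …, N}` with `|I| > (1 - γ)N` the projection `π_I ∘ F̃`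
encodes every member of `𝒰 ⊔ 𝒱`. -/
theorem perturbation_encoding {Y : Type*} [TopologicalSpace Y] [CompactSpace Y]
    [TopologicalSpace.MetrizableSpace Y]
    (N : ℕ) (F : Y → Fin N → ℝ) (hFcont : Continuous F)
    (hFrange : ∀ y i, F y i ∈ Set.Icc (0 : ℝ) 1)
    (γ δ : ℝ) (hγ : 0 ≤ γ) (hδ : 0 < δ)
    (m m' : ℕ) (𝒰 : Fin m → Set Y) (𝒱 : Fin m' → Set Y)
    (h𝒰open : ∀ i, IsOpen (𝒰 i)) (h𝒰cover : (⋃ i, 𝒰 i) = Set.univ)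
    (h𝒱open : ∀ j, IsOpen (𝒱 j))
    (hord : ((famOrd 𝒰 + famOrd 𝒱 : ℕ) : ℝ) ≤ (1 - γ) * N / 2)
    (hosc : ∀ i : Fin m, ∀ x ∈ 𝒰 i, ∀ y ∈ 𝒰 i, ∀ k, |F x k - F y k| < δ / 2) :
    ∃ Ft : Y → Fin N → ℝ, Continuous Ft ∧ (∀ y i, Ft y i ∈ Set.Icc (0 : ℝ) 1) ∧
      (∀ y k, |F y k - Ft y k| < δ) ∧
      ∀ I : Finset (Fin N), (1 - γ) * N < (I.card : ℝ) →
        (∀ i, Encodes (fun y => fun k : I => Ft y k) (𝒰 i)) ∧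
        (∀ j, Encodes (fun y => fun k : I => Ft y k) (𝒱 j)) := by
  classical
  choose h hhc hh0 hh1 hhU using fun i => aux_bump (𝒰 i) (h𝒰open i)
  choose g hgc hg0 hg1 hgV using fun j => aux_bump (𝒱 j) (h𝒱open j)
  let T : Y → ℝ := fun y => ∑ i, h i y
  have hTpos : ∀ y, 0 < T y := by
    intro y
    have : y ∈ ⋃ i, 𝒰 i := by rw [h𝒰cover]; trivial
    obtain ⟨i, hi⟩ := Set.mem_iUnion.1 this
    exact Finset.sum_pos' (fun i _ => hh0 i y) ⟨i, Finset.mem_univ _, (hhU i y).2 hi⟩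
  have hTc : Continuous T := continuous_finsetSum _ fun i _ => hhc i
  let η : ℝ := min (δ / 8) (1 / 4)
  have hη0 : 0 < η := by positivity
  have hη1 : η ≤ δ / 8 := min_le_left _ _
  have hη2 : η ≤ 1 / 4 := min_le_right _ _
  let φ : Fin m → Y → ℝ := fun i y => h i y / T y
  have hφc : ∀ i, Continuous (φ i) := fun i => (hhc i).div hTc fun y => (hTpos y).ne'
  have hφ0 : ∀ i y, 0 ≤ φ i y := fun i y => div_nonneg (hh0 i y) (hTpos y).le
  have hφU : ∀ i y, 0 < φ i y ↔ y ∈ 𝒰 i := fun i y => by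
    rw [← hhU i y]; exact div_pos_iff_of_pos_right (hTpos y)
  have hφ1 : ∀ y, ∑ i, φ i y = 1 := fun y => by
    simp only [φ]
    rw [← Finset.sum_div]
    exact div_self (hTpos y).ne'
  let ψ : Fin m' → Y → ℝ := fun j y => η / (m' + 1) * g j y
  have hκ : 0 < η / (m' + 1) := by positivity
  have hψc : ∀ j, Continuous (ψ j) := fun j => continuous_const.mul (hgc j)
  have hψ0 : ∀ j y, 0 ≤ ψ j y := fun j y => mul_nonneg hκ.le (hg0 j y)
  have hψV : ∀ j y, 0 < ψ j y ↔ y ∈ 𝒱 j := fun j y => by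
    rw [← hgV j y]; exact mul_pos_iff_of_pos_left hκ
  have hψ1 : ∀ y, ∑ j, ψ j y ≤ η := fun y => by
    calc ∑ j, ψ j y ≤ ∑ j : Fin m', η / (m' + 1) :=
          Finset.sum_le_sum fun j _ => mul_le_of_le_one_right hκ.le (hg1 j y)
      _ = m' * (η / (m' + 1)) := by simp
      _ ≤ η := by
        rw [mul_div_assoc', div_le_iff₀ (by positivity)]
        nlinarith
  -- base points
  have hbase : ∀ i, ∃ a : Fin N → ℝ, (∀ k, a k ∈ Set.Icc (0 : ℝ) 1) ∧
      ∀ y ∈ 𝒰 i, ∀ k, |F y k - a k| < δ / 2 := by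
    intro i
    rcases (𝒰 i).eq_empty_or_nonempty with he | ⟨z, hz⟩
    · exact ⟨fun _ => 0, fun _ => by simp, fun y hy => by simp [he] at hy⟩
    · exact ⟨F z, hFrange z, fun y hy k => hosc i y hy z hz k⟩
  choose a ha01 haF using hbase
  obtain ⟨v, hv, hgen⟩ := aux_generic (ι := Fin m ⊕ Fin m') N
    (Sum.elim (fun i k => Set.Ioo (max (a i k - δ / 4) η) (min (a i k + δ / 4) (1 - η)))
      (fun _ _ => Set.Ioo 0 1)) (by
    rintro (i | j) k
    · apply Set.Ioo_infinite
      have := ha01 i k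
      rw [Set.mem_Icc] at this
      rw [max_lt_iff, lt_min_iff, lt_min_iff]
      refine ⟨⟨?_, ?_⟩, ?_, ?_⟩ <;> linarith
    · exact Set.Ioo_infinite one_pos)
  have hp : ∀ i k, |a i k - v (Sum.inl i) k| ≤ δ / 4 ∧ η ≤ v (Sum.inl i) k ∧
      v (Sum.inl i) k ≤ 1 - η := by
    intro i k
    have := hv (Sum.inl i) k
    simp only [Sum.elim_inl, Set.mem_Ioo, max_lt_iff, lt_min_iff] at this
    obtain ⟨⟨h1, h2⟩, h3, h4⟩ := this
    refine ⟨abs_le.2 ⟨by linarith, by linarith⟩, h2.le, h4.le⟩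
  have hq : ∀ j k, 0 ≤ v (Sum.inr j) k ∧ v (Sum.inr j) k ≤ 1 := by
    intro j k
    have := hv (Sum.inr j) k
    simp only [Sum.elim_inr, Set.mem_Ioo] at this
    exact ⟨this.1.le, this.2.le⟩
  let A : Y → Fin N → ℝ := fun y k => ∑ i, φ i y * v (Sum.inl i) k
  let B : Y → Fin N → ℝ := fun y k => ∑ j, ψ j y * v (Sum.inr j) k
  have hB0 : ∀ y k, 0 ≤ B y k := fun y k =>
    Finset.sum_nonneg fun j _ => mul_nonneg (hψ0 j y) (hq j k).1
  have hB1 : ∀ y k, B y k ≤ η := fun y k =>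
    (Finset.sum_le_sum fun j _ => mul_le_of_le_one_right (hψ0 j y) (hq j k).2).trans (hψ1 y)
  have hA0 : ∀ y k, η ≤ A y k := fun y k => by
    calc η = ∑ i, φ i y * η := by rw [← Finset.sum_mul, hφ1, one_mul]
      _ ≤ _ := Finset.sum_le_sum fun i _ => mul_le_mul_of_nonneg_left (hp i k).2.1 (hφ0 i y)
  have hA1 : ∀ y k, A y k ≤ 1 - η := fun y k => by
    calc _ ≤ ∑ i, φ i y * (1 - η) :=
          Finset.sum_le_sum fun i _ => mul_le_mul_of_nonneg_left (hp i k).2.2 (hφ0 i y)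
      _ = 1 - η := by rw [← Finset.sum_mul, hφ1, one_mul]
  have hFA : ∀ y k, |F y k - A y k| ≤ 3 * δ / 4 := fun y k => by
    have e : F y k - A y k = ∑ i, φ i y * (F y k - v (Sum.inl i) k) := by
      simp only [mul_sub, Finset.sum_sub_distrib, A]
      rw [← Finset.sum_mul, hφ1, one_mul]
    rw [e]
    calc _ ≤ ∑ i, |φ i y * (F y k - v (Sum.inl i) k)| := Finset.abs_sum_le_sum_abs _ _
      _ ≤ ∑ i, φ i y * (3 * δ / 4) := by
        refine Finset.sum_le_sum fun i _ => ?_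
        rw [abs_mul, abs_of_nonneg (hφ0 i y)]
        rcases (hφ0 i y).eq_or_lt with h0 | h0
        · rw [← h0]; simp
        · refine mul_le_mul_of_nonneg_left ?_ h0.le
          have h1 := haF i y ((hφU i y).1 h0) k
          have h2 := (hp i k).1
          have h3 := abs_sub_le (F y k) (a i k) (v (Sum.inl i) k)
          linarith
      _ = _ := by rw [← Finset.sum_mul, hφ1, one_mul]
  -- key: the coefficients coincide
  have key : ∀ I : Finset (Fin N), (1 - γ) * N < (I.card : ℝ) → ∀ x y,
      (∀ k ∈ I, A x k + B x k = A y k + B y k) →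
      (∀ i, φ i x = φ i y) ∧ ∀ j, ψ j x = ψ j y := by
    intro I hI x y hxy
    let C : Y → Finset (Fin m ⊕ Fin m') := fun y =>
      (Finset.univ.filter fun i => y ∈ 𝒰 i).disjSum (Finset.univ.filter fun j => y ∈ 𝒱 j)
    have hC : ∀ y, (C y).card ≤ famOrd 𝒰 + famOrd 𝒱 := by
      intro y
      have h1 := aux_ord 𝒰 y
      have h2 := aux_ord 𝒱 y
      rw [Set.ncard_eq_toFinset_card'] at h1 h2
      simp only [C, Finset.card_disjSum]
      simp only [Set.toFinset_setOf] at h1 h2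
      omega
    have hcard : (C x ∪ C y).card ≤ I.card := by
      have h1 := Finset.card_union_le (C x) (C y)
      have h2 := hC x
      have h3 := hC y
      have h4 : (C x ∪ C y).card ≤ 2 * (famOrd 𝒰 + famOrd 𝒱) := by omega
      have h5 : ((C x ∪ C y).card : ℝ) ≤ 2 * ((famOrd 𝒰 + famOrd 𝒱 : ℕ) : ℝ) := by
        exact_mod_cast h4
      have h6 : ((C x ∪ C y).card : ℝ) ≤ I.card := by linarith
      exact_mod_cast h6
    have hz := hgen (Sum.elim (fun i => φ i x - φ i y) (fun j => ψ j x - ψ j y))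
      (C x ∪ C y) I hcard (by
        have e1 : ∀ i z, z ∉ 𝒰 i → φ i z = 0 := fun i z hz =>
          le_antisymm (not_lt.1 fun hlt => hz ((hφU i z).1 hlt)) (hφ0 i z)
        have e2 : ∀ j z, z ∉ 𝒱 j → ψ j z = 0 := fun j z hz =>
          le_antisymm (not_lt.1 fun hlt => hz ((hψV j z).1 hlt)) (hψ0 j z)
        rintro (i | j) hi
        · simp [C] at hi
          simp [e1 i x hi.1, e1 i y hi.2]
        · simp [C] at hi
          simp [e2 j x hi.1, e2 j y hi.2]) (by
        intro k hk
        have := hxy k hk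
        simp only [A, B] at this
        simp only [Fintype.sum_sum_type, Sum.elim_inl, Sum.elim_inr, sub_mul,
          Finset.sum_sub_distrib]
        linarith)
    exact ⟨fun i => sub_eq_zero.1 (hz (Sum.inl i)), fun j => sub_eq_zero.1 (hz (Sum.inr j))⟩
  refine ⟨fun y k => A y k + B y k, ?_, ?_, ?_, ?_⟩
  · refine continuous_pi fun k => Continuous.add ?_ ?_
    · exact continuous_finsetSum _ fun i _ => (hφc i).mul continuous_const
    · exact continuous_finsetSum _ fun j _ => (hψc j).mul continuous_const
  · intro y k
    have := hA0 y k
    have := hA1 y k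
    have := hB0 y k
    have := hB1 y k
    constructor <;> linarith
  · intro y k
    have h1 := abs_le.1 (hFA y k)
    have := hB0 y k
    have := hB1 y k
    rw [abs_lt]
    constructor <;> linarith [h1.1, h1.2]
  · intro I hI
    constructor
    · intro i
      refine Set.Subset.antisymm ?_ (Set.subset_preimage_image _ _)
      rintro x ⟨y, hy, hyx⟩
      have := (key I hI y x fun k hk => congrFun hyx ⟨k, hk⟩).1 i
      rw [← hφU i] at hy ⊢
      rwa [← this]
    · intro j
      refine Set.Subset.antisymm ?_ (Set.subset_preimage_image _ _)
      rintro x ⟨y, hy, hyx⟩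
      have := (key I hI y x fun k hk => congrFun hyx ⟨k, hk⟩).2 j
      rw [← hψV j] at hy ⊢
      rwa [← this]
end
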